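/- arXiv:physics/9705040 — 2 statements merged into one kernel-verified Lean document; each statement's English description precedes it below -/
import Mathlib

section
/- (Transformation law (2.2) of R_n in the realization (3.8), classical part of Theorem 3.1.) Let ξ be a smooth vector field with admissible components ξ^μ, let h_{ρ|ν1…νn} be a family of admissible functions, and let (q_ε) be a variation of loops along ξ. Then the function ε ↦ R_n^{ρ|ν1…νn}(h)[q_ε] is differentiable at ε = 0 and (d/dε)|_{ε=0} R_n^{ρ|ν1…νn}(h)[q_ε] = R_n^{ρ|ν1…νn}( ξ^μ ∂_μ h_{ρ|ν1…νn} + (∂_ρ ξ^μ) h_{μ|ν1…νn} + ∑_{j=1}^{n} (∂_{νj} ξ^μ) h_{ρ|ν1…μ…νn} )[q_0] − (n+1) R_{n+1}^{ρ|μν1…νn}( (∂_μ ξ^0) h_{ρ|ν1…νn} )[q_0] − R_{n+1}^{ρ|μν1…νn}( (∂_ρ ξ^0) h_{μ|ν1…νn} )[q_0] + S_{n+2}^{ρσν1…νn}( (∂_ρ ∂_σ ξ^μ) h_{μ|ν1…νn} )[q_0] − S_{n+3}^{ρσμν1…νn}( (∂_ρ ∂_σ ξ^0) h_{μ|ν1…νn}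 )[q_0]. -/
open Finset Real

/-- Partial derivative `∂_μ f` of a function on `ℝ^N = (Fin N → ℝ)`. -/
noncomputable def pd {N : ℕ} (f : (Fin N → ℝ) → ℝ) (μ : Fin N) (x : Fin N → ℝ) : ℝ :=
  fderiv ℝ f x (Pi.single μ 1)

/-- Second partial derivative `∂_μ ∂_ν f`. -/
noncomputable def pd2 {N : ℕ} (f : (Fin N → ℝ) → ℝ) (μ ν : Fin N) (x : Fin N → ℝ) : ℝ :=
  pd (fun y => pd f ν y) μ x

/-- A function on `ℝ^N` is admissible if it is smooth and `2π`-periodic in `x^0`. -/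
def Admissible {N : ℕ} [NeZero N] (f : (Fin N → ℝ) → ℝ) : Prop :=
  ContDiff ℝ (⊤ : ℕ∞) f ∧ ∀ x, f (x + Pi.single 0 (2 * π)) = f x

/-- A loop is a smooth map `q : ℝ → ℝ^N` with `q^0(t) = t` and each spatial
component `2π`-periodic. -/
def IsLoop {N : ℕ} [NeZero N] (q : ℝ → Fin N → ℝ) : Prop :=
  ContDiff ℝ (⊤ : ℕ∞) q ∧ (∀ t, q t 0 = t) ∧ ∀ t, ∀ i ≠ (0 : Fin N), q (t + 2 * π) i = q t i

/-- A variation of loops along the vector field `ξ`: a jointly smooth family of loops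
`q_ε` with `∂_ε q_ε^μ(t)|_{ε=0} = ξ^μ(q₀(t)) − q̇₀^μ(t) ξ^0(q₀(t))`. -/
def IsVariation {N : ℕ} [NeZero N] (ξ : Fin N → (Fin N → ℝ) → ℝ)
    (Q : ℝ → ℝ → Fin N → ℝ) : Prop :=
  (∀ ε, IsLoop (Q ε)) ∧ ContDiff ℝ (⊤ : ℕ∞) (fun p : ℝ × ℝ => Q p.1 p.2) ∧
    ∀ t μ, deriv (fun ε => Q ε t μ) 0
      = ξ μ (Q 0 t) - deriv (fun s => Q 0 s μ) t * ξ 0 (Q 0 t)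

/-- `S_n^{ν₁…νₙ}(g)[q] = (1/2πi) ∫₀^{2π} q̇^{ν₁}⋯q̇^{νₙ} g_{ν₁…νₙ}(q(t)) dt`,
summed over all the indices. -/
noncomputable def Sop {N : ℕ} (n : ℕ) (g : (Fin n → Fin N) → (Fin N → ℝ) → ℝ)
    (q : ℝ → Fin N → ℝ) : ℂ :=
  (1 / (2 * π * Complex.I)) *
    ((∫ t in (0:ℝ)..(2 * π), ∑ ν : Fin n → Fin N,
        (∏ l, deriv (fun s => q s (ν l)) t) * g ν (q t) : ℝ) : ℂ)

/-- `R_n^{ρ|ν₁…νₙ}(h)[q] = (1/2πi) ∫₀^{2π} q̈^ρ q̇^{ν₁}⋯q̇^{νₙ} h_{ρ|ν₁…νₙ}(q(t)) dt`,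
summed over all the indices. -/
noncomputable def Rop {N : ℕ} (n : ℕ) (h : Fin N → (Fin n → Fin N) → (Fin N → ℝ) → ℝ)
    (q : ℝ → Fin N → ℝ) : ℂ :=
  (1 / (2 * π * Complex.I)) *
    ((∫ t in (0:ℝ)..(2 * π), ∑ ρ, ∑ ν : Fin n → Fin N,
        deriv (deriv (fun s => q s ρ)) t *
          (∏ l, deriv (fun s => q s (ν l)) t) * h ρ ν (q t) : ℝ) : ℂ)

/-!
The integrand of `R_n(h)` is a Lagrangian `L(x, u, a)` evaluated on the second-order jet
`(q, q̇, q̈)` of the loop, so `d/dε ∫ L = ∫ dL(jet of δ)` with `δ = ξ(q) - φ(q) q̇`, `φ = ξ⁰`.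

On the jet of `ξ(q)`, `dL` gives the integrand of the Lie-derivative term plus, from the part of
`q̈` quadratic in the velocity, that of the `S_{n+2}` term. For the reparametrization `φ q̇`,
Leibniz gives
`jet (φ q̇) = φ · jet q̇ + φ̇ · (0, q̇, 2 q̈) + φ̈ · (0, 0, q̇)`,
where `dL(jet q̇) = dL/dt`, `dL(0, u, 2a) = (n + 2) L` since `L` has degree `n` in `u` and `1` in
`a`, and `dL(0, 0, u) = L(x, u, u)` by linearity in `a`. The total derivative `d/dt (φ L)`
integrates to zero by periodicity, which leaves `-(n + 1) φ̇ L - φ̈ L(x, u, u)`; expanding `φ̇` and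
`φ̈` by the chain rule yields the terms containing `∂ξ⁰` and `∂∂ξ⁰`.
-/

section Curves

variable {E : Type*} [NormedAddCommGroup E] [NormedSpace ℝ E]

theorem contDiff_uncurry_deriv_right {Q : ℝ → ℝ → E} {m k : WithTop ℕ∞}
    (hQ : ContDiff ℝ k (Function.uncurry Q)) (hmk : m + 1 ≤ k) :
    ContDiff ℝ m (Function.uncurry fun ε t => deriv (Q ε) t) := by
  have h : ContDiff ℝ k (Function.uncurry fun (p : ℝ × ℝ) s => Q p.1 s) :=
    hQ.comp (by fun_prop : ContDiff ℝ k fun r : (ℝ × ℝ) × ℝ => (r.1.1, r.2))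
  exact h.fderiv_apply contDiff_snd contDiff_const hmk

theorem contDiff_uncurry_deriv_left {Q : ℝ → ℝ → E} {m k : WithTop ℕ∞}
    (hQ : ContDiff ℝ k (Function.uncurry Q)) (hmk : m + 1 ≤ k) :
    ContDiff ℝ m (Function.uncurry fun ε t => deriv (fun e => Q e t) ε) := by
  have hswap : ContDiff ℝ k (Function.uncurry fun t ε => Q ε t) :=
    hQ.comp (by fun_prop : ContDiff ℝ k fun p : ℝ × ℝ => (p.2, p.1))
  exact (contDiff_uncurry_deriv_right hswap hmk).comp
    (by fun_prop : ContDiff ℝ m fun p : ℝ × ℝ => (p.2, p.1))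

theorem hasDerivAt_comp_prodMk_left {f : ℝ × ℝ → E} {p : ℝ × ℝ} (hf : DifferentiableAt ℝ f p) :
    HasDerivAt (fun ε => f (ε, p.2)) (fderiv ℝ f p (1, 0)) p.1 :=
  hf.hasFDerivAt.comp_hasDerivAt p.1 ((hasDerivAt_id _).prodMk (hasDerivAt_const _ _))

theorem hasDerivAt_comp_prodMk_right {f : ℝ × ℝ → E} {p : ℝ × ℝ} (hf : DifferentiableAt ℝ f p) :
    HasDerivAt (fun t => f (p.1, t)) (fderiv ℝ f p (0, 1)) p.2 :=
  hf.hasFDerivAt.comp_hasDerivAt p.2 ((hasDerivAt_const _ _).prodMk (hasDerivAt_id _))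

theorem fderiv_fderiv_apply_comm {F : Type*} [NormedAddCommGroup F] [NormedSpace ℝ F] {f : F → E}
    (hf : ContDiff ℝ 2 f) (v w x : F) :
    fderiv ℝ (fun y => fderiv ℝ f y v) x w = fderiv ℝ (fun y => fderiv ℝ f y w) x v := by
  have hf' : DifferentiableAt ℝ (fderiv ℝ f) x :=
    (hf.fderiv_right (m := 1) (by norm_num)).differentiable one_ne_zero x
  simpa [fderiv_clm_apply hf' (differentiableAt_const _)] using
    (hf.contDiffAt.isSymmSndFDerivAt (by simp)).eq w v

theorem hasDerivAt_deriv_right {Q : ℝ → ℝ → E} (hQ : ContDiff ℝ 2 (Function.uncurry Q))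
    (ε t : ℝ) :
    HasDerivAt (fun e => deriv (Q e) t) (deriv (fun s => deriv (fun e => Q e s) ε) t) ε := by
  have hQd := hQ.differentiable two_ne_zero
  have hQ' (v : ℝ × ℝ) : Differentiable ℝ fun p => fderiv ℝ (Function.uncurry Q) p v :=
    ((hQ.fderiv_right (m := 1) (by norm_num)).clm_apply contDiff_const).differentiable one_ne_zero
  have hleft (s : ℝ) : deriv (fun e => Q e s) ε = fderiv ℝ (Function.uncurry Q) (ε, s) (1, 0) :=
    (hasDerivAt_comp_prodMk_left (hQd (ε, s))).deriv
  have hright (e : ℝ) : deriv (Q e) t = fderiv ℝ (Function.uncurry Q) (e, t) (0, 1) :=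
    (hasDerivAt_comp_prodMk_right (hQd (e, t))).deriv
  simp only [hleft, hright]
  rw [(hasDerivAt_comp_prodMk_right (hQ' (1, 0) (ε, t))).deriv, fderiv_fderiv_apply_comm hQ]
  exact hasDerivAt_comp_prodMk_left (hQ' (0, 1) (ε, t))

theorem hasDerivAt_intervalIntegral_of_contDiff {F : ℝ → ℝ → E}
    (hF : ContDiff ℝ 1 (Function.uncurry F)) (a b x₀ : ℝ) :
    HasDerivAt (fun x => ∫ t in a..b, F x t) (∫ t in a..b, deriv (fun x => F x t) x₀) x₀ := by
  have hF' : Continuous (Function.uncurry fun x t => deriv (fun y => F y t) x) :=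
    (contDiff_uncurry_deriv_left (m := 0) hF (by simp)).continuous
  have hslice (x : ℝ) : Continuous (F x) := hF.continuous.comp (by fun_prop : Continuous (x, ·))
  obtain ⟨C, hC⟩ := ((isCompact_closedBall x₀ 1).prod (isCompact_uIcc (a := a) (b := b))
    ).exists_bound_of_continuousOn hF'.continuousOn
  refine (intervalIntegral.hasDerivAt_integral_of_dominated_loc_of_deriv_le
    (F' := fun x t => deriv (fun y => F y t) x) (bound := fun _ => C)
    (Metric.closedBall_mem_nhds x₀ one_pos) ?_ ?_ ?_ ?_ ?_ ?_).2
  · exact .of_forall fun x => (hslice x).aestronglyMeasurable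
  · exact (hslice x₀).intervalIntegrable a b
  · exact (hF'.comp (by fun_prop : Continuous (x₀, ·))).aestronglyMeasurable
  · exact .of_forall fun t ht x hx => hC (x, t) ⟨hx, Set.uIoc_subset_uIcc ht⟩
  · exact intervalIntegrable_const
  · refine .of_forall fun t _ x _ => DifferentiableAt.hasDerivAt ?_
    exact (hF.differentiable one_ne_zero (x, t)).comp x
      (by fun_prop : DifferentiableAt ℝ (fun y => (y, t)) x)

/-- The second-order jet `(q, q̇, q̈)` of a curve `q`, the point at which second-order Lagrangians
are evaluated. -/
noncomputable def jet₂ (q : ℝ → E) (t : ℝ) : E × E × E :=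
  (q t, deriv q t, deriv (deriv q) t)

theorem contDiff_uncurry_jet₂ {Q : ℝ → ℝ → E} {m : WithTop ℕ∞}
    (hQ : ContDiff ℝ (m + 2) (Function.uncurry Q)) :
    ContDiff ℝ m (Function.uncurry fun ε => jet₂ (Q ε)) := by
  rw [← one_add_one_eq_two, ← add_assoc] at hQ
  have hQ' := contDiff_uncurry_deriv_right hQ le_rfl
  have hQ'' := contDiff_uncurry_deriv_right hQ' le_rfl
  exact (hQ.of_le (le_self_add.trans le_self_add)).prodMk ((hQ'.of_le le_self_add).prodMk hQ'')

theorem contDiff_jet₂ {q : ℝ → E} {m : WithTop ℕ∞} (hq : ContDiff ℝ (m + 2) q) :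
    ContDiff ℝ m (jet₂ q) :=
  (contDiff_uncurry_jet₂ (Q := fun _ => q) (hq.comp contDiff_snd)).comp
    (by fun_prop : ContDiff ℝ m ((0 : ℝ), ·))

theorem hasDerivAt_jet₂ {q : ℝ → E} (hq : ContDiff ℝ 3 q) (t : ℝ) :
    HasDerivAt (jet₂ q) (jet₂ (deriv q) t) t := by
  have hq' : ContDiff ℝ 2 (deriv q) := (contDiff_succ_iff_deriv.1 hq).2.2
  have hq'' : ContDiff ℝ 1 (deriv (deriv q)) := (contDiff_succ_iff_deriv.1 hq').2.2
  exact (hq.differentiable three_ne_zero t).hasDerivAt.prodMk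
    ((hq'.differentiable two_ne_zero t).hasDerivAt.prodMk
      (hq''.differentiable one_ne_zero t).hasDerivAt)

theorem hasDerivAt_jet₂_family {Q : ℝ → ℝ → E} (hQ : ContDiff ℝ 3 (Function.uncurry Q))
    (ε t : ℝ) :
    HasDerivAt (fun e => jet₂ (Q e) t) (jet₂ (fun s => deriv (fun e => Q e s) ε) t) ε := by
  have hQ₂ : ContDiff ℝ 2 (Function.uncurry Q) := hQ.of_le (by norm_num)
  have hQ' : ContDiff ℝ 2 (Function.uncurry fun ε t => deriv (Q ε) t) :=
    contDiff_uncurry_deriv_right hQ (by norm_num)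
  have hcomm (s : ℝ) := hasDerivAt_deriv_right hQ₂ ε s
  refine HasDerivAt.prodMk ?_ ((hcomm t).prodMk ?_)
  · exact ((hQ.differentiable three_ne_zero (ε, t)).comp ε
      (by fun_prop : DifferentiableAt ℝ (fun e => (e, t)) ε)).hasDerivAt
  · simpa only [(hcomm _).deriv] using hasDerivAt_deriv_right hQ' ε t

theorem jet₂_sub {f g : ℝ → E} (hf : ContDiff ℝ 2 f) (hg : ContDiff ℝ 2 g) (t : ℝ) :
    jet₂ (fun s => f s - g s) t = jet₂ f t - jet₂ g t := by
  have hf' : ContDiff ℝ 1 (deriv f) := (contDiff_succ_iff_deriv.1 hf).2.2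
  have hg' : ContDiff ℝ 1 (deriv g) := (contDiff_succ_iff_deriv.1 hg).2.2
  have hderiv : deriv (fun s => f s - g s) = fun s => deriv f s - deriv g s := funext fun s =>
    deriv_fun_sub (hf.differentiable two_ne_zero s) (hg.differentiable two_ne_zero s)
  simp only [jet₂, hderiv, Prod.mk_sub_mk]
  rw [deriv_fun_sub (hf'.differentiable one_ne_zero t) (hg'.differentiable one_ne_zero t)]

theorem jet₂_smul {c : ℝ → ℝ} {f : ℝ → E} (hc : ContDiff ℝ 2 c) (hf : ContDiff ℝ 2 f) (t : ℝ) :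
    jet₂ (fun s => c s • f s) t = c t • jet₂ f t + deriv c t • (0, f t, (2 : ℝ) • deriv f t)
      + deriv (deriv c) t • (0, 0, f t) := by
  have hc' : ContDiff ℝ 1 (deriv c) := (contDiff_succ_iff_deriv.1 hc).2.2
  have hf' : ContDiff ℝ 1 (deriv f) := (contDiff_succ_iff_deriv.1 hf).2.2
  have dc := (hc.differentiable two_ne_zero · |>.hasDerivAt)
  have df := (hf.differentiable two_ne_zero · |>.hasDerivAt)
  have dc' := (hc'.differentiable one_ne_zero · |>.hasDerivAt)
  have df' := (hf'.differentiable one_ne_zero · |>.hasDerivAt)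
  have hderiv : deriv (fun s => c s • f s) = fun s => c s • deriv f s + deriv c s • f s :=
    funext fun s => ((dc s).fun_smul (df s)).deriv
  have hderiv₂ := (((dc t).fun_smul (df' t)).fun_add ((dc' t).fun_smul (df t))).deriv
  simp only [jet₂, hderiv, hderiv₂, Prod.smul_mk, Prod.mk_add_mk, smul_zero, add_zero]
  refine Prod.ext rfl (Prod.ext rfl ?_)
  module

theorem jet₂_add_of_shift {q : ℝ → E} {c : ℝ} {v : E} (hq : ∀ t, q (t + c) = q t + v) (t : ℝ) :
    jet₂ q (t + c) = jet₂ q t + (v, 0, 0) := by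
  have hq' (t : ℝ) : deriv q (t + c) = deriv q t := by
    simp only [← deriv_comp_add_const, hq, deriv_add_const]
  have hq'' (t : ℝ) : deriv (deriv q) (t + c) = deriv (deriv q) t := by
    simp only [← deriv_comp_add_const (deriv q), hq']
  simp only [jet₂, hq, hq', hq'', Prod.mk_add_mk, add_zero]

theorem hasDerivAt_integral_comp_jet₂ {L : E × E × E → ℝ} (hL : ContDiff ℝ 1 L) {Q : ℝ → ℝ → E}
    (hQ : ContDiff ℝ 3 (Function.uncurry Q)) (a b ε : ℝ) :
    HasDerivAt (fun e => ∫ t in a..b, L (jet₂ (Q e) t))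
      (∫ t in a..b, fderiv ℝ L (jet₂ (Q ε) t) (jet₂ (fun s => deriv (fun e => Q e s) ε) t)) ε := by
  have hint := hasDerivAt_intervalIntegral_of_contDiff (F := fun e t => L (jet₂ (Q e) t))
    (hL.comp (contDiff_uncurry_jet₂ (m := 1) (hQ.of_le (by norm_num)))) a b ε
  have hpointwise (t : ℝ) := ((hL.differentiable one_ne_zero _).hasFDerivAt.comp_hasDerivAt ε
    (hasDerivAt_jet₂_family hQ ε t)).deriv
  exact hint.congr_deriv (intervalIntegral.integral_congr fun t _ => hpointwise t)

theorem fderiv_jet₂_sub_smul_deriv {L : E × E × E → ℝ} (hL : Differentiable ℝ L) {q X : ℝ → E}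
    {c : ℝ → ℝ} (hq : ContDiff ℝ 3 q) (hX : ContDiff ℝ 2 X) (hc : ContDiff ℝ 2 c) (t : ℝ) :
    fderiv ℝ L (jet₂ q t) (jet₂ (fun s => X s - c s • deriv q s) t)
      = fderiv ℝ L (jet₂ q t) (jet₂ X t) - deriv (fun s => c s * L (jet₂ q s)) t
        + deriv c t * (L (jet₂ q t)
          - fderiv ℝ L (jet₂ q t) (0, deriv q t, (2 : ℝ) • deriv (deriv q) t))
        - deriv (deriv c) t * fderiv ℝ L (jet₂ q t) (0, 0, deriv q t) := by
  have hq' : ContDiff ℝ 2 (deriv q) := (contDiff_succ_iff_deriv.1 hq).2.2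
  have htotal := ((hc.differentiable two_ne_zero t).hasDerivAt.fun_mul
    ((hL _).hasFDerivAt.comp_hasDerivAt t (hasDerivAt_jet₂ hq t))).deriv
  simp only [Function.comp_apply] at htotal
  rw [jet₂_sub hX (by fun_prop), jet₂_smul hc hq', htotal]
  simp only [map_sub, map_add, map_smul, smul_eq_mul]
  ring

end Curves

section IndexSums

variable {R : Type*} [CommSemiring R] {α : Type*} [Fintype α]

theorem sum_fin_succ_arrow {n : ℕ} (f : (Fin (n + 1) → α) → R) :
    ∑ κ, f κ = ∑ μ, ∑ ν : Fin n → α, f (Fin.cons μ ν) := by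
  rw [← Fintype.sum_prod_type', ← (Fin.consEquiv fun _ => α).sum_comp]
  rfl

variable {ι : Type*} [Fintype ι] [DecidableEq ι]

theorem sum_sum_update (j : ι) (f : α → (ι → α) → R) :
    ∑ ν : ι → α, ∑ μ, f (ν j) (Function.update ν j μ) = ∑ ν : ι → α, ∑ σ, f σ ν := by
  let swap : (ι → α) × α ≃ (ι → α) × α :=
    Function.Involutive.toPerm (fun p => (Function.update p.1 j p.2, p.1 j)) fun p => by simp
  rw [← Fintype.sum_prod_type', ← Fintype.sum_prod_type' (f := fun ν σ => f σ ν),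
    ← swap.sum_comp fun p => f p.2 p.1]
  rfl

theorem sum_prod_mul_sum_update (u : α → R) (c : α → α → R) (g : (ι → α) → R) :
    ∑ ν : ι → α, (∏ l, u (ν l)) * ∑ j, ∑ μ, c μ (ν j) * g (Function.update ν j μ)
      = ∑ ν : ι → α, (∑ j, (∏ l ∈ univ.erase j, u (ν l)) * ∑ σ, u σ * c (ν j) σ) * g ν := by
  have herase (j : ι) (ν : ι → α) (μ : α) :
      ∏ l ∈ univ.erase j, u (Function.update ν j μ l) = ∏ l ∈ univ.erase j, u (ν l) :=
    prod_congr rfl fun l hl => by rw [Function.update_of_ne (ne_of_mem_erase hl)]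
  simp only [mul_sum, sum_mul]
  rw [sum_comm, sum_comm (s := univ (α := ι → α))]
  refine sum_congr rfl fun j _ => ?_
  rw [← sum_sum_update j fun σ ν => (∏ l ∈ univ.erase j, u (ν l)) * (u σ * c (ν j) σ) * g ν]
  refine sum_congr rfl fun ν _ => sum_congr rfl fun μ _ => ?_
  rw [← mul_prod_erase univ (fun l => u (ν l)) (mem_univ j), Function.update_self, herase]
  ring

end IndexSums

section Prolongation

variable {N : ℕ}

theorem fderiv_apply_eq_sum_pd (f : (Fin N → ℝ) → ℝ) (x v : Fin N → ℝ) :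
    fderiv ℝ f x v = ∑ μ, v μ * pd f μ x := by
  conv_lhs => rw [pi_eq_sum_univ' v, map_sum]
  simp only [map_smul, smul_eq_mul, pd]

theorem contDiff_pd {f : (Fin N → ℝ) → ℝ} {m k : WithTop ℕ∞} (hf : ContDiff ℝ k f)
    (hmk : m + 1 ≤ k) (μ : Fin N) : ContDiff ℝ m (pd f μ) :=
  (hf.fderiv_right hmk).clm_apply contDiff_const

theorem continuous_pd {f : (Fin N → ℝ) → ℝ} (hf : ContDiff ℝ 1 f) (μ : Fin N) :
    Continuous (pd f μ) :=
  (contDiff_pd (m := 0) hf (by simp) μ).continuous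

theorem continuous_pd2 {f : (Fin N → ℝ) → ℝ} (hf : ContDiff ℝ 2 f) (μ ν : Fin N) :
    Continuous (pd2 f μ ν) :=
  continuous_pd (contDiff_pd hf (by norm_num) ν) μ

/-- The total derivative `u^σ ∂_σ f` of `f` along a curve through `x` with velocity `u`, as a
function on jets. -/
noncomputable def totalDeriv (f : (Fin N → ℝ) → ℝ) (x u : Fin N → ℝ) : ℝ :=
  ∑ σ, u σ * pd f σ x

/-- The second total derivative `a^σ ∂_σ f + u^σ u^τ ∂_σ ∂_τ f` of `f` along a curve through `x`
with velocity `u` and acceleration `a`, as a function on jets. -/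
noncomputable def totalDeriv₂ (f : (Fin N → ℝ) → ℝ) (x u a : Fin N → ℝ) : ℝ :=
  totalDeriv f x a + ∑ σ, ∑ τ, u σ * u τ * pd2 f σ τ x

theorem hasDerivAt_comp_curve {f : (Fin N → ℝ) → ℝ} {q : ℝ → Fin N → ℝ} {t : ℝ}
    (hf : DifferentiableAt ℝ f (q t)) (hq : DifferentiableAt ℝ q t) :
    HasDerivAt (fun s => f (q s)) (totalDeriv f (q t) (deriv q t)) t :=
  (hf.hasFDerivAt.comp_hasDerivAt t hq.hasDerivAt).congr_deriv (fderiv_apply_eq_sum_pd ..)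

theorem hasDerivAt_totalDeriv_curve {f : (Fin N → ℝ) → ℝ} {q : ℝ → Fin N → ℝ}
    (hf : ContDiff ℝ 2 f) (hq : ContDiff ℝ 2 q) (t : ℝ) :
    HasDerivAt (fun s => totalDeriv f (q s) (deriv q s))
      (totalDeriv₂ f (q t) (deriv q t) (deriv (deriv q) t)) t := by
  have hq' : ContDiff ℝ 1 (deriv q) := (contDiff_succ_iff_deriv.1 hq).2.2
  have hvel (σ : Fin N) : HasDerivAt (fun s => deriv q s σ) (deriv (deriv q) t σ) t :=
    hasDerivAt_pi.1 (hq'.differentiable one_ne_zero t).hasDerivAt σ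
  have hpd (σ : Fin N) := hasDerivAt_comp_curve
    ((contDiff_pd hf (m := 1) (by norm_num) σ).differentiable one_ne_zero (q t))
    (hq.differentiable two_ne_zero t)
  refine (HasDerivAt.fun_sum fun σ _ => (hvel σ).mul (hpd σ)).congr_deriv ?_
  rw [sum_add_distrib, totalDeriv₂, totalDeriv]
  congr 1
  simp only [totalDeriv, mul_sum]
  rw [sum_comm]
  exact sum_congr rfl fun σ _ => sum_congr rfl fun τ _ => by rw [pd2]; ring

theorem jet₂_comp {ξ : Fin N → (Fin N → ℝ) → ℝ} {q : ℝ → Fin N → ℝ}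
    (hξ : ∀ μ, ContDiff ℝ 2 (ξ μ)) (hq : ContDiff ℝ 2 q) (t : ℝ) :
    jet₂ (fun s μ => ξ μ (q s)) t
      = (fun μ => ξ μ (q t), fun μ => totalDeriv (ξ μ) (q t) (deriv q t),
          fun μ => totalDeriv₂ (ξ μ) (q t) (deriv q t) (deriv (deriv q) t)) := by
  have hvel : deriv (fun s μ => ξ μ (q s)) = fun s μ => totalDeriv (ξ μ) (q s) (deriv q s) :=
    funext fun s => (hasDerivAt_pi.2 fun μ => hasDerivAt_comp_curve
      ((hξ μ).differentiable two_ne_zero _) (hq.differentiable two_ne_zero s)).deriv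
  rw [jet₂, hvel, (hasDerivAt_pi.2 fun μ => hasDerivAt_totalDeriv_curve (hξ μ) hq t).deriv]

end Prolongation

section Densities

variable {N n : ℕ}

/-- The integrand `a^ρ u^{ν₁}⋯u^{νₙ} h_{ρ|ν₁…νₙ}(x)` of `R_n(h)`, as a Lagrangian on jets
`(x, u, a)`. -/
noncomputable def rDensity (h : Fin N → (Fin n → Fin N) → (Fin N → ℝ) → ℝ)
    (j : (Fin N → ℝ) × (Fin N → ℝ) × (Fin N → ℝ)) : ℝ :=
  ∑ ρ, ∑ ν : Fin n → Fin N, j.2.2 ρ * (∏ l, j.2.1 (ν l)) * h ρ ν j.1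

/-- The integrand `u^{ν₁}⋯u^{νₙ} g_{ν₁…νₙ}(x)` of `S_n(g)`, as a function of position and
velocity. -/
noncomputable def sDensity (g : (Fin n → Fin N) → (Fin N → ℝ) → ℝ) (x u : Fin N → ℝ) : ℝ :=
  ∑ ν : Fin n → Fin N, (∏ l, u (ν l)) * g ν x

theorem contDiff_rDensity {h : Fin N → (Fin n → Fin N) → (Fin N → ℝ) → ℝ} {m : WithTop ℕ∞}
    (hh : ∀ ρ ν, ContDiff ℝ m (h ρ ν)) : ContDiff ℝ m (rDensity h) := by
  have hvel (μ : Fin N) :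
      ContDiff ℝ m fun j : (Fin N → ℝ) × (Fin N → ℝ) × (Fin N → ℝ) => j.2.1 μ := by fun_prop
  unfold rDensity
  exact ContDiff.sum fun ρ _ => ContDiff.sum fun ν _ =>
    (ContDiff.mul (by fun_prop) (contDiff_prod fun l _ => hvel (ν l))).mul
      ((hh ρ ν).comp contDiff_fst)

theorem Rop_eq_integral_rDensity (h : Fin N → (Fin n → Fin N) → (Fin N → ℝ) → ℝ)
    {q : ℝ → Fin N → ℝ} (hq : ContDiff ℝ 2 q) :
    Rop n h q = 1 / (2 * π * Complex.I) *
      ((∫ t in (0 : ℝ)..(2 * π), rDensity h (jet₂ q t) : ℝ) : ℂ) := by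
  have hq' : ContDiff ℝ 1 (deriv q) := (contDiff_succ_iff_deriv.1 hq).2.2
  have hvel (μ : Fin N) : deriv (fun s => q s μ) = fun t => deriv q t μ := funext fun t =>
    (hasDerivAt_pi.1 (hq.differentiable two_ne_zero t).hasDerivAt μ).deriv
  have hacc (μ : Fin N) : deriv (fun s => deriv q s μ) = fun t => deriv (deriv q) t μ :=
    funext fun t => (hasDerivAt_pi.1 (hq'.differentiable one_ne_zero t).hasDerivAt μ).deriv
  simp only [Rop, hvel, hacc, rDensity, jet₂]

theorem Sop_eq_integral_sDensity (g : (Fin n → Fin N) → (Fin N → ℝ) → ℝ)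
    {q : ℝ → Fin N → ℝ} (hq : Differentiable ℝ q) :
    Sop n g q = 1 / (2 * π * Complex.I) *
      ((∫ t in (0 : ℝ)..(2 * π), sDensity g (q t) (deriv q t) : ℝ) : ℂ) := by
  have hvel (μ : Fin N) : deriv (fun s => q s μ) = fun t => deriv q t μ := funext fun t =>
    (hasDerivAt_pi.1 (hq t).hasDerivAt μ).deriv
  simp only [Sop, hvel, sDensity]

theorem fderiv_rDensity {h : Fin N → (Fin n → Fin N) → (Fin N → ℝ) → ℝ}
    (hh : ∀ ρ ν, ContDiff ℝ 1 (h ρ ν)) (x u a x' u' a' : Fin N → ℝ) :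
    fderiv ℝ (rDensity h) (x, u, a) (x', u', a')
      = rDensity (fun ρ ν y => ∑ μ, x' μ * pd (h ρ ν) μ y) (x, u, a)
        + ∑ ρ, ∑ ν : Fin n → Fin N,
            a ρ * (∑ j, (∏ l ∈ univ.erase j, u (ν l)) * u' (ν j)) * h ρ ν x
        + rDensity h (x, u, a') := by
  have hline (y v : Fin N → ℝ) : HasDerivAt (fun s : ℝ => y + s • v) v 0 := by
    simpa using ((hasDerivAt_id (0 : ℝ)).smul_const v).const_add y
  have hcurve := (hline x x').prodMk ((hline u u').prodMk (hline a a'))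
  have hchain := ((contDiff_rDensity hh).differentiable one_ne_zero
    (x + (0 : ℝ) • x', u + (0 : ℝ) • u', a + (0 : ℝ) • a')).hasFDerivAt.comp_hasDerivAt 0 hcurve
  have hterm (ρ : Fin N) (ν : Fin n → Fin N) := ((hasDerivAt_pi.1 (hline a a') ρ).mul
    (HasDerivAt.fun_finsetProd (u := univ) fun l _ => hasDerivAt_pi.1 (hline u u') (ν l))).mul
      (((hh ρ ν).differentiable one_ne_zero _).hasFDerivAt.comp_hasDerivAt 0 (hline x x'))
  have hsum := HasDerivAt.fun_sum (u := univ) fun ρ _ =>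
    HasDerivAt.fun_sum (u := univ) fun ν _ => hterm ρ ν
  have h_eq := hchain.unique hsum
  simp only [zero_smul, add_zero, fderiv_apply_eq_sum_pd (h _ _), smul_eq_mul] at h_eq
  rw [h_eq]
  simp only [rDensity, ← sum_add_distrib]
  refine sum_congr rfl fun ρ _ => sum_congr rfl fun ν _ => ?_
  simp only [Function.comp_apply, zero_smul, add_zero, Pi.add_apply, Pi.smul_apply, smul_eq_mul,
    Pi.mul_apply, zero_mul]
  ring

theorem fderiv_rDensity_acceleration {h : Fin N → (Fin n → Fin N) → (Fin N → ℝ) → ℝ}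
    (hh : ∀ ρ ν, ContDiff ℝ 1 (h ρ ν)) (x u a a' : Fin N → ℝ) :
    fderiv ℝ (rDensity h) (x, u, a) (0, 0, a') = rDensity h (x, u, a') := by
  rw [fderiv_rDensity hh]
  simp [rDensity]

theorem fderiv_rDensity_euler {h : Fin N → (Fin n → Fin N) → (Fin N → ℝ) → ℝ}
    (hh : ∀ ρ ν, ContDiff ℝ 1 (h ρ ν)) (x u a : Fin N → ℝ) :
    fderiv ℝ (rDensity h) (x, u, a) (0, u, (2 : ℝ) • a) = (n + 2) * rDensity h (x, u, a) := by
  have hprod (ν : Fin n → Fin N) (j : Fin n) :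
      (∏ l ∈ univ.erase j, u (ν l)) * u (ν j) = ∏ l, u (ν l) :=
    prod_erase_mul univ (fun l => u (ν l)) (mem_univ j)
  rw [fderiv_rDensity hh]
  simp only [rDensity, mul_sum, hprod, ← sum_add_distrib]
  refine sum_congr rfl fun ρ _ => sum_congr rfl fun ν _ => ?_
  simp only [Pi.zero_apply, zero_mul, mul_zero, sum_const_zero, sum_const, card_univ,
    Fintype.card_fin, nsmul_eq_mul, zero_add, Pi.smul_apply, smul_eq_mul]
  ring

end Densities

section TransformationLaw

variable {N n : ℕ}

/-- The components of the Lie derivative along `ξ` of the covariant tensor field `h`: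
`ξ^μ ∂_μ h_{ρ|ν₁…νₙ} + (∂_ρ ξ^μ) h_{μ|ν₁…νₙ} + ∑_j (∂_{νⱼ} ξ^μ) h_{ρ|ν₁…μ…νₙ}`. -/
noncomputable def lieFamily (ξ : Fin N → (Fin N → ℝ) → ℝ)
    (h : Fin N → (Fin n → Fin N) → (Fin N → ℝ) → ℝ) (ρ : Fin N) (ν : Fin n → Fin N)
    (x : Fin N → ℝ) : ℝ :=
  (∑ μ, ξ μ x * pd (h ρ ν) μ x)
    + (∑ μ, pd (ξ μ) ρ x * h μ ν x)
    + ∑ j, ∑ μ, pd (ξ μ) (ν j) x * h ρ (Function.update ν j μ) x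

/-- The family `(∂_μ φ) h_{ρ|ν₁…νₙ}` with indices `ρ|μν₁…νₙ`. -/
noncomputable def velocityGradFamily (φ : (Fin N → ℝ) → ℝ)
    (h : Fin N → (Fin n → Fin N) → (Fin N → ℝ) → ℝ) (ρ : Fin N) (κ : Fin (n + 1) → Fin N)
    (x : Fin N → ℝ) : ℝ :=
  pd φ (κ 0) x * h ρ (fun l => κ l.succ) x

/-- The family `(∂_ρ φ) h_{μ|ν₁…νₙ}` with indices `ρ|μν₁…νₙ`. -/
noncomputable def accelerationGradFamily (φ : (Fin N → ℝ) → ℝ)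
    (h : Fin N → (Fin n → Fin N) → (Fin N → ℝ) → ℝ) (ρ : Fin N) (κ : Fin (n + 1) → Fin N)
    (x : Fin N → ℝ) : ℝ :=
  pd φ ρ x * h (κ 0) (fun l => κ l.succ) x

/-- The family `(∂_ρ ∂_σ ξ^μ) h_{μ|ν₁…νₙ}` with indices `ρσν₁…νₙ`. -/
noncomputable def vectorHessFamily (ξ : Fin N → (Fin N → ℝ) → ℝ)
    (h : Fin N → (Fin n → Fin N) → (Fin N → ℝ) → ℝ) (κ : Fin (n + 2) → Fin N)
    (x : Fin N → ℝ) : ℝ :=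
  ∑ μ, pd2 (ξ μ) (κ 0) (κ 1) x * h μ (fun l => κ l.succ.succ) x

/-- The family `(∂_ρ ∂_σ φ) h_{μ|ν₁…νₙ}` with indices `ρσμν₁…νₙ`. -/
noncomputable def scalarHessFamily (φ : (Fin N → ℝ) → ℝ)
    (h : Fin N → (Fin n → Fin N) → (Fin N → ℝ) → ℝ) (κ : Fin (n + 3) → Fin N)
    (x : Fin N → ℝ) : ℝ :=
  pd2 φ (κ 0) (κ 1) x * h (κ 2) (fun l => κ l.succ.succ.succ) x

theorem rDensity_succ (k : Fin N → (Fin (n + 1) → Fin N) → (Fin N → ℝ) → ℝ)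
    (x u a : Fin N → ℝ) :
    rDensity k (x, u, a) = ∑ ρ, ∑ σ, ∑ ν : Fin n → Fin N,
      a ρ * (u σ * ∏ l, u (ν l)) * k ρ (Fin.cons σ ν) x := by
  simp only [rDensity, sum_fin_succ_arrow, Fin.prod_univ_succ, Fin.cons_zero, Fin.cons_succ]

theorem rDensity_velocityGradFamily (φ : (Fin N → ℝ) → ℝ)
    (h : Fin N → (Fin n → Fin N) → (Fin N → ℝ) → ℝ) (x u a : Fin N → ℝ) :
    rDensity (velocityGradFamily φ h) (x, u, a) = totalDeriv φ x u * rDensity h (x, u, a) := by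
  rw [rDensity_succ, rDensity, mul_sum]
  refine sum_congr rfl fun ρ _ => ?_
  simp only [totalDeriv, sum_mul_sum, velocityGradFamily, Fin.cons_zero, Fin.cons_succ]
  exact sum_congr rfl fun _ _ => sum_congr rfl fun _ _ => by ring

theorem rDensity_accelerationGradFamily (φ : (Fin N → ℝ) → ℝ)
    (h : Fin N → (Fin n → Fin N) → (Fin N → ℝ) → ℝ) (x u a : Fin N → ℝ) :
    rDensity (accelerationGradFamily φ h) (x, u, a)
      = totalDeriv φ x a * rDensity h (x, u, u) := by
  rw [rDensity_succ, rDensity, totalDeriv, sum_mul]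
  refine sum_congr rfl fun ρ _ => ?_
  simp only [mul_sum, accelerationGradFamily, Fin.cons_zero, Fin.cons_succ]
  exact sum_congr rfl fun _ _ => sum_congr rfl fun _ _ => by ring

theorem sDensity_scalarHessFamily (φ : (Fin N → ℝ) → ℝ)
    (h : Fin N → (Fin n → Fin N) → (Fin N → ℝ) → ℝ) (x u : Fin N → ℝ) :
    sDensity (scalarHessFamily φ h) x u
      = (∑ σ, ∑ τ, u σ * u τ * pd2 φ σ τ x) * rDensity h (x, u, u) := by
  have hcons (σ τ μ : Fin N) (ν : Fin n → Fin N) :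
      (Fin.cons σ (Fin.cons τ (Fin.cons μ ν)) : Fin (n + 3) → Fin N) 2 = μ := rfl
  simp only [sDensity, scalarHessFamily, sum_fin_succ_arrow, Fin.prod_univ_succ, Fin.cons_zero,
    Fin.cons_succ, Fin.cons_one, hcons, rDensity, sum_mul]
  refine sum_congr rfl fun σ _ => sum_congr rfl fun τ _ => ?_
  simp only [mul_sum]
  exact sum_congr rfl fun _ _ => sum_congr rfl fun _ _ => by ring

theorem sDensity_vectorHessFamily (ξ : Fin N → (Fin N → ℝ) → ℝ)
    (h : Fin N → (Fin n → Fin N) → (Fin N → ℝ) → ℝ) (x u : Fin N → ℝ) :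
    sDensity (vectorHessFamily ξ h) x u
      = rDensity h (x, u, fun μ => ∑ σ, ∑ τ, u σ * u τ * pd2 (ξ μ) σ τ x) := by
  simp only [sDensity, vectorHessFamily, rDensity, sum_fin_succ_arrow, Fin.prod_univ_succ,
    Fin.cons_zero, Fin.cons_succ, Fin.cons_one, mul_sum, sum_mul]
  calc ∑ σ, ∑ τ, ∑ ν : Fin n → Fin N, ∑ μ,
        u σ * (u τ * ∏ l, u (ν l)) * (pd2 (ξ μ) σ τ x * h μ ν x)
      = ∑ σ, ∑ τ, ∑ μ, ∑ ν : Fin n → Fin N,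
          u σ * u τ * pd2 (ξ μ) σ τ x * (∏ l, u (ν l)) * h μ ν x :=
        sum_congr rfl fun σ _ => sum_congr rfl fun τ _ => by
          rw [sum_comm]
          exact sum_congr rfl fun _ _ => sum_congr rfl fun _ _ => by ring
    _ = ∑ μ, ∑ σ, ∑ τ, ∑ ν : Fin n → Fin N,
          u σ * u τ * pd2 (ξ μ) σ τ x * (∏ l, u (ν l)) * h μ ν x := by
        rw [sum_congr rfl fun σ _ => sum_comm, sum_comm]
    _ = ∑ μ, ∑ ν : Fin n → Fin N, ∑ σ, ∑ τ,
          u σ * u τ * pd2 (ξ μ) σ τ x * (∏ l, u (ν l)) * h μ ν x :=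
        sum_congr rfl fun μ _ => by rw [sum_congr rfl fun σ _ => sum_comm, sum_comm]

theorem rDensity_totalDeriv_acceleration (ξ : Fin N → (Fin N → ℝ) → ℝ)
    (h : Fin N → (Fin n → Fin N) → (Fin N → ℝ) → ℝ) (x u a : Fin N → ℝ) :
    rDensity h (x, u, fun μ => totalDeriv (ξ μ) x a)
      = rDensity (fun ρ ν y => ∑ μ, pd (ξ μ) ρ y * h μ ν y) (x, u, a) := by
  simp only [rDensity, totalDeriv, mul_sum, sum_mul]
  rw [sum_comm, sum_comm (t := univ (α := Fin n → Fin N))]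
  refine sum_congr rfl fun ν _ => ?_
  rw [sum_comm]
  exact sum_congr rfl fun _ _ => sum_congr rfl fun _ _ => by ring

theorem fderiv_rDensity_prolongation {ξ : Fin N → (Fin N → ℝ) → ℝ}
    {h : Fin N → (Fin n → Fin N) → (Fin N → ℝ) → ℝ} (hh : ∀ ρ ν, ContDiff ℝ 1 (h ρ ν))
    (x u a : Fin N → ℝ) :
    fderiv ℝ (rDensity h) (x, u, a)
        (fun μ => ξ μ x, fun μ => totalDeriv (ξ μ) x u, fun μ => totalDeriv₂ (ξ μ) x u a)
      = rDensity (lieFamily ξ h) (x, u, a) + sDensity (vectorHessFamily ξ h) x u := by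
  have hvel (ρ : Fin N) : ∑ ν : Fin n → Fin N, a ρ * (∏ l, u (ν l)) *
        ∑ j, ∑ μ, pd (ξ μ) (ν j) x * h ρ (Function.update ν j μ) x
      = ∑ ν : Fin n → Fin N, a ρ *
          (∑ j, (∏ l ∈ univ.erase j, u (ν l)) * totalDeriv (ξ (ν j)) x u) * h ρ ν x := by
    simp only [mul_assoc (a ρ), ← mul_sum]
    rw [sum_prod_mul_sum_update u (fun μ σ => pd (ξ μ) σ x) fun ν => h ρ ν x]
    rfl
  have hacc : rDensity h (x, u, fun μ => totalDeriv₂ (ξ μ) x u a)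
      = rDensity (fun ρ ν y => ∑ μ, pd (ξ μ) ρ y * h μ ν y) (x, u, a)
        + sDensity (vectorHessFamily ξ h) x u := by
    rw [← rDensity_totalDeriv_acceleration, sDensity_vectorHessFamily]
    simp only [rDensity, totalDeriv₂, add_mul, sum_add_distrib]
  rw [fderiv_rDensity hh, hacc]
  simp only [rDensity, lieFamily, mul_add, sum_add_distrib, hvel]
  ring

theorem fderiv_rDensity_variation {ξ : Fin N → (Fin N → ℝ) → ℝ} {φ : (Fin N → ℝ) → ℝ}
    {h : Fin N → (Fin n → Fin N) → (Fin N → ℝ) → ℝ} {q : ℝ → Fin N → ℝ}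
    (hξ : ∀ μ, ContDiff ℝ 2 (ξ μ)) (hφ : ContDiff ℝ 2 φ) (hh : ∀ ρ ν, ContDiff ℝ 1 (h ρ ν))
    (hq : ContDiff ℝ 3 q) (t : ℝ) :
    fderiv ℝ (rDensity h) (jet₂ q t)
        (jet₂ (fun s => (fun μ => ξ μ (q s)) - φ (q s) • deriv q s) t)
      = rDensity (lieFamily ξ h) (jet₂ q t)
        - (n + 1) * rDensity (velocityGradFamily φ h) (jet₂ q t)
        - rDensity (accelerationGradFamily φ h) (jet₂ q t)
        + sDensity (vectorHessFamily ξ h) (q t) (deriv q t)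
        - sDensity (scalarHessFamily φ h) (q t) (deriv q t)
        - deriv (fun s => φ (q s) * rDensity h (jet₂ q s)) t := by
  have hq₂ : ContDiff ℝ 2 q := hq.of_le (by norm_num)
  have hφq : deriv (fun s => φ (q s)) = fun s => totalDeriv φ (q s) (deriv q s) :=
    funext fun s => (hasDerivAt_comp_curve (hφ.differentiable two_ne_zero _)
      (hq.differentiable three_ne_zero s)).deriv
  rw [fderiv_jet₂_sub_smul_deriv (X := fun s μ => ξ μ (q s)) (c := fun s => φ (q s))
    ((contDiff_rDensity hh).differentiable one_ne_zero) hq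
    (contDiff_pi.2 fun μ => (hξ μ).comp hq₂) (hφ.comp hq₂), jet₂_comp hξ hq₂, hφq,
    (hasDerivAt_totalDeriv_curve hφ hq₂ t).deriv]
  simp only [jet₂, fderiv_rDensity_prolongation hh, fderiv_rDensity_euler hh,
    fderiv_rDensity_acceleration hh, rDensity_velocityGradFamily, rDensity_accelerationGradFamily,
    sDensity_scalarHessFamily]
  rw [totalDeriv₂]
  ring

theorem continuous_rDensity_jet₂ {h : Fin N → (Fin n → Fin N) → (Fin N → ℝ) → ℝ}
    {q : ℝ → Fin N → ℝ} (hh : ∀ ρ ν, Continuous (h ρ ν)) (hq : ContDiff ℝ 2 q) :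
    Continuous fun t => rDensity h (jet₂ q t) :=
  (contDiff_rDensity fun ρ ν => contDiff_zero.2 (hh ρ ν)).continuous.comp
    (contDiff_jet₂ (m := 0) (hq.of_le (by simp))).continuous

theorem continuous_sDensity_deriv {g : (Fin n → Fin N) → (Fin N → ℝ) → ℝ}
    {q : ℝ → Fin N → ℝ} (hg : ∀ ν, Continuous (g ν)) (hq : ContDiff ℝ 1 q) :
    Continuous fun t => sDensity g (q t) (deriv q t) := by
  have hvel (μ : Fin N) : Continuous fun t => deriv q t μ :=
    (continuous_apply μ).comp (hq.continuous_deriv le_rfl)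
  exact continuous_finsetSum _ fun ν _ =>
    (continuous_finsetProd _ fun l _ => hvel (ν l)).mul ((hg ν).comp hq.continuous)

theorem rDensity_periodic {h : Fin N → (Fin n → Fin N) → (Fin N → ℝ) → ℝ} {v : Fin N → ℝ}
    (hh : ∀ ρ ν, Function.Periodic (h ρ ν) v) : Function.Periodic (rDensity h) (v, 0, 0) := by
  intro j
  simp [rDensity, hh _ _ _]

theorem contDiff_mul_rDensity_jet₂ {φ : (Fin N → ℝ) → ℝ}
    {h : Fin N → (Fin n → Fin N) → (Fin N → ℝ) → ℝ} {q : ℝ → Fin N → ℝ} {m : WithTop ℕ∞}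
    (hφ : ContDiff ℝ m φ) (hh : ∀ ρ ν, ContDiff ℝ m (h ρ ν)) (hq : ContDiff ℝ (m + 2) q) :
    ContDiff ℝ m fun t => φ (q t) * rDensity h (jet₂ q t) :=
  (hφ.comp (hq.of_le le_self_add)).mul ((contDiff_rDensity hh).comp (contDiff_jet₂ hq))

theorem integral_deriv_mul_rDensity_eq_zero {φ : (Fin N → ℝ) → ℝ}
    {h : Fin N → (Fin n → Fin N) → (Fin N → ℝ) → ℝ} {q : ℝ → Fin N → ℝ} {c : ℝ} {v : Fin N → ℝ}
    (hφ : ContDiff ℝ 1 φ) (hφv : Function.Periodic φ v)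
    (hh : ∀ ρ ν, ContDiff ℝ 1 (h ρ ν)) (hhv : ∀ ρ ν, Function.Periodic (h ρ ν) v)
    (hq : ContDiff ℝ 3 q) (hqv : ∀ t, q (t + c) = q t + v) (t₀ : ℝ) :
    ∫ t in t₀..(t₀ + c), deriv (fun s => φ (q s) * rDensity h (jet₂ q s)) t = 0 := by
  have hφL := contDiff_mul_rDensity_jet₂ hφ hh (hq.of_le (by norm_num))
  rw [intervalIntegral.integral_deriv_of_contDiffOn_uIcc hφL.contDiffOn, jet₂_add_of_shift hqv,
    rDensity_periodic hhv, hqv, hφv, sub_self]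

theorem integral_fderiv_rDensity_variation {ξ : Fin N → (Fin N → ℝ) → ℝ} {φ : (Fin N → ℝ) → ℝ}
    {h : Fin N → (Fin n → Fin N) → (Fin N → ℝ) → ℝ} {q : ℝ → Fin N → ℝ} {c : ℝ} {v : Fin N → ℝ}
    (hξ : ∀ μ, ContDiff ℝ 2 (ξ μ)) (hφ : ContDiff ℝ 2 φ) (hφv : Function.Periodic φ v)
    (hh : ∀ ρ ν, ContDiff ℝ 1 (h ρ ν)) (hhv : ∀ ρ ν, Function.Periodic (h ρ ν) v)
    (hq : ContDiff ℝ 3 q) (hqv : ∀ t, q (t + c) = q t + v) (t₀ : ℝ) :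
    ∫ t in t₀..(t₀ + c), fderiv ℝ (rDensity h) (jet₂ q t)
        (jet₂ (fun s => (fun μ => ξ μ (q s)) - φ (q s) • deriv q s) t)
      = (∫ t in t₀..(t₀ + c), rDensity (lieFamily ξ h) (jet₂ q t))
        - (n + 1) * (∫ t in t₀..(t₀ + c), rDensity (velocityGradFamily φ h) (jet₂ q t))
        - (∫ t in t₀..(t₀ + c), rDensity (accelerationGradFamily φ h) (jet₂ q t))
        + (∫ t in t₀..(t₀ + c), sDensity (vectorHessFamily ξ h) (q t) (deriv q t))
        - ∫ t in t₀..(t₀ + c), sDensity (scalarHessFamily φ h) (q t) (deriv q t) := by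
  have hξ' (μ σ : Fin N) := continuous_pd ((hξ μ).of_le one_le_two) σ
  have hφ₁ : ContDiff ℝ 1 φ := hφ.of_le one_le_two
  have hφ' (σ : Fin N) := continuous_pd hφ₁ σ
  have hξ'' (μ σ τ : Fin N) := continuous_pd2 (hξ μ) σ τ
  have hφ'' (σ τ : Fin N) := continuous_pd2 hφ σ τ
  have hh' (ρ : Fin N) (ν : Fin n → Fin N) (μ : Fin N) := continuous_pd (hh ρ ν) μ
  have hξ₀ (μ : Fin N) := (hξ μ).continuous
  have hh₀ (ρ : Fin N) (ν : Fin n → Fin N) := (hh ρ ν).continuous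
  have hq₁ : ContDiff ℝ 1 q := hq.of_le (by norm_num)
  have hq₂ : ContDiff ℝ 2 q := hq.of_le (by norm_num)
  have hlie := continuous_rDensity_jet₂ (h := lieFamily ξ h)
    (fun ρ ν => by unfold lieFamily; fun_prop) hq₂
  have hvel := continuous_rDensity_jet₂ (h := velocityGradFamily φ h)
    (fun ρ κ => by unfold velocityGradFamily; fun_prop) hq₂
  have hacc := continuous_rDensity_jet₂ (h := accelerationGradFamily φ h)
    (fun ρ κ => by unfold accelerationGradFamily; fun_prop) hq₂
  have hvec := continuous_sDensity_deriv (g := vectorHessFamily ξ h)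
    (fun κ => by unfold vectorHessFamily; fun_prop) hq₁
  have hscal := continuous_sDensity_deriv (g := scalarHessFamily φ h)
    (fun κ => by unfold scalarHessFamily; fun_prop) hq₁
  have htotal :=
    (contDiff_mul_rDensity_jet₂ hφ₁ hh (hq.of_le (by norm_num))).continuous_deriv le_rfl
  simp only [fderiv_rDensity_variation hξ hφ hh hq]
  rw [intervalIntegral.integral_sub, intervalIntegral.integral_sub, intervalIntegral.integral_add,
    intervalIntegral.integral_sub, intervalIntegral.integral_sub,
    intervalIntegral.integral_const_mul,
    integral_deriv_mul_rDensity_eq_zero hφ₁ hφv hh hhv hq hqv, sub_zero]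
  all_goals exact Continuous.intervalIntegrable (by fun_prop) _ _

theorem R_transformation_law_general {ξ : Fin N → (Fin N → ℝ) → ℝ} {φ : (Fin N → ℝ) → ℝ}
    {h : Fin N → (Fin n → Fin N) → (Fin N → ℝ) → ℝ} {Q : ℝ → ℝ → Fin N → ℝ} {v : Fin N → ℝ}
    (hξ : ∀ μ, ContDiff ℝ 2 (ξ μ)) (hφ : ContDiff ℝ 2 φ) (hφv : Function.Periodic φ v)
    (hh : ∀ ρ ν, ContDiff ℝ 1 (h ρ ν)) (hhv : ∀ ρ ν, Function.Periodic (h ρ ν) v)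
    (hQ : ContDiff ℝ 3 (Function.uncurry Q)) (hQv : ∀ t, Q 0 (t + 2 * π) = Q 0 t + v)
    (hvar : ∀ t μ, deriv (fun ε => Q ε t μ) 0
      = ξ μ (Q 0 t) - deriv (fun s => Q 0 s μ) t * φ (Q 0 t)) :
    HasDerivAt (fun ε => Rop n h (Q ε))
      (Rop n (lieFamily ξ h) (Q 0) - ((n : ℂ) + 1) * Rop (n + 1) (velocityGradFamily φ h) (Q 0)
        - Rop (n + 1) (accelerationGradFamily φ h) (Q 0)
        + Sop (n + 2) (vectorHessFamily ξ h) (Q 0)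
        - Sop (n + 3) (scalarHessFamily φ h) (Q 0)) 0 := by
  have hslice (ε : ℝ) : ContDiff ℝ 3 (Q ε) := hQ.comp (by fun_prop : ContDiff ℝ 3 (ε, ·))
  have hslice₂ (ε : ℝ) : ContDiff ℝ 2 (Q ε) := (hslice ε).of_le (by norm_num)
  have hQd : Differentiable ℝ (Q 0) := (hslice 0).differentiable three_ne_zero
  have hδ : (fun t => deriv (fun ε => Q ε t) 0)
      = fun t => (fun μ => ξ μ (Q 0 t)) - φ (Q 0 t) • deriv (Q 0) t := by
    ext t μ
    have hQt : DifferentiableAt ℝ (fun ε => Q ε t) 0 :=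
      (hQ.comp (by fun_prop : ContDiff ℝ 3 (·, t))).differentiable three_ne_zero 0
    rw [← (hasDerivAt_pi.1 hQt.hasDerivAt μ).deriv, hvar,
      (hasDerivAt_pi.1 (hQd t).hasDerivAt μ).deriv]
    simp only [Pi.sub_apply, Pi.smul_apply, smul_eq_mul, mul_comm]
  have hderiv := hasDerivAt_integral_comp_jet₂ (contDiff_rDensity hh) hQ 0 (2 * π) 0
  have hint := integral_fderiv_rDensity_variation hξ hφ hφv hh hhv (hslice 0) hQv 0
  rw [zero_add] at hint
  rw [hδ, hint] at hderiv
  simp only [Rop_eq_integral_rDensity _ (hslice₂ _), Sop_eq_integral_sDensity _ hQd]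
  refine (hderiv.ofReal_comp.const_mul (1 / (2 * π * Complex.I))).congr_deriv ?_
  push_cast
  ring

end TransformationLaw

theorem IsLoop.apply_add_two_pi {N : ℕ} [NeZero N] {q : ℝ → Fin N → ℝ} (hq : IsLoop q) (t : ℝ) :
    q (t + 2 * π) = q t + Pi.single 0 (2 * π) := by
  ext i
  rcases eq_or_ne i 0 with rfl | hi
  · simp [hq.2.1]
  · simp [hi, hq.2.2 t i hi]

/-- Transformation law (2.2) of `R_n` in the realization (3.8): along a variation of
loops `q_ε` in the direction of `ξ`,
`(d/dε)|₀ R_n(h)[q_ε] = R_n(ξ^μ∂_μ h + (∂_ρ ξ^μ) h_{μ|…} + ∑_j ∂_{νⱼ}ξ^μ h_{ρ|…μ…})[q₀]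
  − (n+1) R_{n+1}((∂_μ ξ^0) h_{ρ|…})[q₀] − R_{n+1}((∂_ρ ξ^0) h_{μ|…})[q₀]
  + S_{n+2}((∂_ρ∂_σ ξ^μ) h_{μ|…})[q₀] − S_{n+3}((∂_ρ∂_σ ξ^0) h_{μ|…})[q₀]`. -/
theorem R_transformation_law (N : ℕ) [NeZero N] (n : ℕ)
    (ξ : Fin N → (Fin N → ℝ) → ℝ) (hξ : ∀ μ, Admissible (ξ μ))
    (h : Fin N → (Fin n → Fin N) → (Fin N → ℝ) → ℝ) (hh : ∀ ρ ν, Admissible (h ρ ν))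
    (Q : ℝ → ℝ → Fin N → ℝ) (hQ : IsVariation ξ Q) :
    HasDerivAt (fun ε => Rop n h (Q ε))
      (Rop n (fun ρ ν x =>
          (∑ μ, ξ μ x * pd (h ρ ν) μ x)
            + (∑ μ, pd (ξ μ) ρ x * h μ ν x)
            + ∑ j, ∑ μ, pd (ξ μ) (ν j) x * h ρ (Function.update ν j μ) x) (Q 0)
        - ((n : ℂ) + 1) *
            Rop (n + 1) (fun ρ κ x =>
              pd (ξ 0) (κ 0) x * h ρ (fun l => κ l.succ) x) (Q 0)
        - Rop (n + 1) (fun ρ κ x =>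
              pd (ξ 0) ρ x * h (κ 0) (fun l => κ l.succ) x) (Q 0)
        + Sop (n + 2) (fun κ x =>
              ∑ μ, pd2 (ξ μ) (κ 0) (κ 1) x * h μ (fun l => κ l.succ.succ) x) (Q 0)
        - Sop (n + 3) (fun κ x =>
              pd2 (ξ 0) (κ 0) (κ 1) x * h (κ 2) (fun l => κ l.succ.succ.succ) x) (Q 0))
      0 := by
  exact R_transformation_law_general (fun μ => contDiff_infty.1 (hξ μ).1 2)
    (contDiff_infty.1 (hξ 0).1 2) (hξ 0).2 (fun ρ ν => contDiff_infty.1 (hh ρ ν).1 1)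
    (fun ρ ν => (hh ρ ν).2) (contDiff_infty.1 hQ.2.1 3) (hQ.1 0).apply_add_two_pi hQ.2.2
end

section
/- (Cocycle underlying the g^a-term of eqs. (4.2)–(4.3).) Let 𝔤 be a finite-dimensional real Lie algebra and φ : 𝔤 → ℝ a linear functional vanishing on [𝔤,𝔤]. Let V = W ⊕ L𝔤 be the semidirect sum with brackets [L_m, L_n] = (m−n) L_{m+n}, [L_m, X(n)] = −n X(m+n), [X(m), Y(n)] = [X,Y](m+n). Define the antisymmetric bilinear form ω on V by ω(L_m, X(n)) = −ω(X(n), L_m) = m² δ_{m+n,0} φ(X) for X ∈ 𝔤, and ω = 0 on W×W and on L𝔤×L𝔤. Then ω is a 2-cocycle on V: for all x, y, z ∈ V, ω([x,y], z) + ω([y,z], x) + ω([z,x], y) = 0. -/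
/-- The bracket of the semidirect sum `W ⋉ L𝔤`:
`[L_m, L_n] = (m−n) L_{m+n}`, `[L_m, X(n)] = −n X(m+n)`,
`[X(m), Y(n)] = [X,Y](m+n)`; elements are pairs of finitely supported families of
Witt coefficients and loop-algebra coefficients. -/
noncomputable def wLoopBracket (𝔤 : Type*) [LieRing 𝔤] [LieAlgebra ℝ 𝔤]
    (x y : (ℤ →₀ ℝ) × (ℤ →₀ 𝔤)) : (ℤ →₀ ℝ) × (ℤ →₀ 𝔤) :=
  ⟨x.1.sum fun m a => y.1.sum fun n b =>
      Finsupp.single (m + n) (a * b * ((m : ℝ) - (n : ℝ))),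
   (x.1.sum fun m a => y.2.sum fun n X =>
        Finsupp.single (m + n) ((a * (-(n : ℝ))) • X))
    + (x.2.sum fun m X => y.1.sum fun n b =>
        Finsupp.single (m + n) ((b * (m : ℝ)) • X))
    + (x.2.sum fun m X => y.2.sum fun n Y => Finsupp.single (m + n) ⁅X, Y⁆)⟩

/-- The antisymmetric bilinear form `ω` on `W ⋉ L𝔤` with
`ω(L_m, X(n)) = −ω(X(n), L_m) = m² δ_{m+n,0} φ(X)` and `ω = 0` on `W×W` and
`L𝔤×L𝔤`. -/
noncomputable def wLoopOmega (𝔤 : Type*) [LieRing 𝔤] [LieAlgebra ℝ 𝔤]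
    (φ : 𝔤 →ₗ[ℝ] ℝ) (x y : (ℤ →₀ ℝ) × (ℤ →₀ 𝔤)) : ℝ :=
  (x.1.sum fun m a => a * (m : ℝ) ^ 2 * φ (y.2 (-m)))
    - (y.1.sum fun n b => b * (n : ℝ) ^ 2 * φ (x.2 (-n)))

/-!
Put `D = T d/dT` and send `L_m` to `T^m` and `X(n)` to `φ(X) T^n`. Since `φ` kills the commutators
of `𝔤`, the bracket becomes `[a, b] = (D a) b - a (D b)`, `[a, f] = -a (D f)`, `[f, g] = 0`, and
`ω(a, f)` becomes the constant coefficient of `(D² a) f`. With `E(a, b) = (D² a) b - a (D² b)` one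
has `D² [a, b] = D E(a, b)`, and the cyclic sum for the pairs `(a, f)`, `(b, g)`, `(c, h)` collapses
to the constant coefficient of `D (E(a, b) h + E(b, c) f + E(c, a) g)`. It vanishes, because an
element of the image of `D` has no constant coefficient.
-/

section SemidirectBracket

variable {R A M : Type*} [CommRing R] [CommRing A] [Algebra R A] [AddCommGroup M] [Module R M]

/-- The bracket on `A × A` of the semidirect sum of the Lie algebra of the derivations `a • (-D)`,
`a : A`, with its module `A`. -/
def semidirectBracket (D : Derivation R A A) (p q : A × A) : A × A :=
  (D p.1 * q.1 - p.1 * D q.1, D p.2 * q.1 - p.1 * D q.2)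

/-- The antisymmetric form on `A × A` that pairs the derivation `a • (-D)` with the module
element `f` to `τ (D (D a) * f)`. -/
def semidirectForm (D : Derivation R A A) (τ : A →ₗ[R] M) (p q : A × A) : M :=
  τ (D (D p.1) * q.2) - τ (D (D q.1) * p.2)

theorem semidirectForm_cocycle (D : Derivation R A A) (τ : A →ₗ[R] M) (hτ : ∀ a, τ (D a) = 0)
    (p q r : A × A) :
    semidirectForm D τ (semidirectBracket D p q) r
      + semidirectForm D τ (semidirectBracket D q r) p
      + semidirectForm D τ (semidirectBracket D r p) q = 0 := by
  let E (a b : A) : A := D (D a) * b - a * D (D b)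
  calc
    _ = τ (D (E p.1 q.1 * r.2 + E q.1 r.1 * p.2 + E r.1 p.1 * q.2)) := by
      simp only [semidirectForm, semidirectBracket, ← map_sub, ← map_add]
      congr 1
      simp only [E, map_sub, map_add, Derivation.leibniz, smul_eq_mul]
      ring
    _ = 0 := hτ _

end SemidirectBracket

section WeightDerivation

open AddMonoidAlgebra

lemma sum_pointwise_smul {ι R N : Type*} [Semiring R] [AddCommMonoid N] (w : ι → R) (f : ι →₀ R)
    {h : ι → R → N} (h_zero : ∀ i, h i 0 = 0) :
    (w • f).sum h = f.sum fun i r ↦ h i (w i * r) := by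
  refine Finsupp.sum_of_support_subset _ (fun i hi ↦ ?_) h fun i _ ↦ h_zero i
  rw [Finsupp.mem_support_iff, Finsupp.coe_pointwise_smul, Pi.smul_apply'] at hi
  exact Finsupp.mem_support_iff.mpr (right_ne_zero_of_smul hi)

variable {R G : Type*} [CommSemiring R]

/-- The operator `T^m ↦ w(m) T^m` on `R[G]`, for an arbitrary weight function `w`. -/
noncomputable def weightOperator (w : G → R) : R[G] →ₗ[R] R[G] where
  toFun f := .ofCoeff (w • f.coeff)
  map_add' f g := by rw [coeff_add, smul_add, ofCoeff_add]
  map_smul' c f := by rw [coeff_smul, smul_comm, ofCoeff_smul, RingHom.id_apply]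

lemma coeff_weightOperator (w : G → R) (f : R[G]) : (weightOperator w f).coeff = w • f.coeff :=
  rfl

lemma weightOperator_single (w : G → R) (m : G) (r : R) :
    weightOperator w (single m r) = single m (w m * r) := by
  ext n
  obtain rfl | hn := eq_or_ne n m <;> simp [coeff_weightOperator, *]

variable [AddCommMonoid G]

lemma weightOperator_mul (w : G →+ R) (f g : R[G]) :
    weightOperator w (f * g) = f • weightOperator w g + g • weightOperator w f := by
  induction f using AddMonoidAlgebra.induction_linear with
  | zero => simp
  | add f f' hf hf' =>
    rw [add_mul, map_add, hf, hf', map_add, smul_add, add_smul]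
    abel
  | single m r =>
    induction g using AddMonoidAlgebra.induction_linear with
    | zero => simp
    | add g g' hg hg' =>
      rw [mul_add, map_add, hg, hg', map_add, smul_add, add_smul]
      abel
    | single n s =>
      simp only [smul_eq_mul, single_mul_single, weightOperator_single, map_add, add_comm n m,
        ← single_add]
      congr 1
      ring

/-- The derivation `T^m ↦ w(m) T^m` of the monoid algebra `R[G]` given by an additive weight `w`;
for `G = ℤ` and `w(m) = m` it is the Euler operator `T d/dT` on Laurent polynomials. -/
noncomputable def weightDerivation (w : G →+ R) : Derivation R R[G] R[G] where
  toLinearMap := weightOperator w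
  map_one_eq_zero' := by rw [one_def, weightOperator_single, map_zero, zero_mul, single_zero]
  leibniz' := weightOperator_mul w

lemma coeff_weightDerivation (w : G →+ R) (f : R[G]) :
    (weightDerivation w f).coeff = (w : G → R) • f.coeff := rfl

lemma coeff_zero_weightDerivation (w : G →+ R) (f : R[G]) :
    (weightDerivation w f).coeff 0 = 0 := by
  rw [coeff_weightDerivation, Finsupp.coe_pointwise_smul, Pi.smul_apply', map_zero, zero_smul]

lemma weightDerivation_mul (w : G →+ R) (f g : R[G]) :
    weightDerivation w f * g =
      f.coeff.sum fun m r ↦ g.coeff.sum fun n s ↦ single (m + n) (w m * r * s) := by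
  rw [mul_def, coeff_weightDerivation, sum_pointwise_smul _ _ (by simp)]

lemma mul_weightDerivation (w : G →+ R) (f g : R[G]) :
    f * weightDerivation w g =
      f.coeff.sum fun m r ↦ g.coeff.sum fun n s ↦ single (m + n) (r * (w n * s)) := by
  rw [mul_def, coeff_weightDerivation]
  exact Finsupp.sum_congr fun m _ ↦ sum_pointwise_smul _ _ (by simp)

end WeightDerivation

section Laurent

open scoped LaurentPolynomial

variable {R V : Type*} [CommSemiring R] [AddCommMonoid V] [Module R V]

/-- The constant coefficient of a Laurent polynomial `f`, i.e. the residue of `f dT/T`. -/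
noncomputable def constantCoeff : R[T;T⁻¹] →ₗ[R] R :=
  Finsupp.lapply 0 ∘ₗ (AddMonoidAlgebra.coeffLinearEquiv R).toLinearMap

lemma constantCoeff_apply (f : R[T;T⁻¹]) : constantCoeff f = f.coeff 0 := rfl

/-- The map `X(n) ↦ φ(X) T^n` from `V`-valued Laurent polynomials, given by their coefficients, to
scalar ones. -/
noncomputable def loopToLaurent (φ : V →ₗ[R] R) : (ℤ →₀ V) →ₗ[R] R[T;T⁻¹] :=
  (AddMonoidAlgebra.coeffLinearEquiv R).symm.toLinearMap ∘ₗ Finsupp.mapRange.linearMap φ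

lemma loopToLaurent_single (φ : V →ₗ[R] R) (n : ℤ) (X : V) :
    loopToLaurent φ (Finsupp.single n X) = .single n (φ X) :=
  congrArg AddMonoidAlgebra.ofCoeff (Finsupp.mapRange_single (hf := φ.map_zero))

lemma sum_coeff_loopToLaurent {N : Type*} [AddCommMonoid N] (φ : V →ₗ[R] R) (Z : ℤ →₀ V)
    {h : ℤ → R → N} (h_zero : ∀ n, h n 0 = 0) :
    (loopToLaurent φ Z).coeff.sum h = Z.sum fun n X ↦ h n (φ X) :=
  Finsupp.sum_mapRange_index (hf := φ.map_zero) h_zero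

/-- The map `L_m ↦ (T^m, 0)`, `X(n) ↦ (0, φ(X) T^n)` from `W ⋉ L𝔤` to pairs of Laurent
polynomials, written for an arbitrary coefficient module `V` in place of `𝔤`. -/
noncomputable def wLoopToLaurent (φ : V →ₗ[R] R) (x : (ℤ →₀ R) × (ℤ →₀ V)) :
    R[T;T⁻¹] × R[T;T⁻¹] :=
  (.ofCoeff x.1, loopToLaurent φ x.2)

end Laurent

section EulerDerivation

open scoped LaurentPolynomial

variable {R : Type*} [CommRing R]

/-- The Euler operator `T d/dT` on Laurent polynomials. -/
noncomputable def eulerDerivation : Derivation R R[T;T⁻¹] R[T;T⁻¹] :=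
  weightDerivation (Int.castAddHom R)

lemma coeff_eulerDerivation (f : R[T;T⁻¹]) :
    (eulerDerivation f).coeff = (fun m : ℤ ↦ (m : R)) • f.coeff :=
  rfl

lemma eulerDerivation_mul (f g : R[T;T⁻¹]) :
    eulerDerivation f * g =
      f.coeff.sum fun m r ↦ g.coeff.sum fun n s ↦ .single (m + n) ((m : R) * r * s) :=
  weightDerivation_mul _ f g

lemma mul_eulerDerivation (f g : R[T;T⁻¹]) :
    f * eulerDerivation g =
      f.coeff.sum fun m r ↦ g.coeff.sum fun n s ↦ .single (m + n) (r * ((n : R) * s)) :=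
  mul_weightDerivation _ f g

lemma constantCoeff_eulerDerivation (f : R[T;T⁻¹]) : constantCoeff (eulerDerivation f) = 0 :=
  coeff_zero_weightDerivation _ f

lemma constantCoeff_eulerDerivation_sq_mul (a f : R[T;T⁻¹]) :
    constantCoeff (eulerDerivation (eulerDerivation a) * f) =
      a.coeff.sum fun m r ↦ r * (m : R) ^ 2 * f.coeff (-m) := by
  rw [constantCoeff_apply, AddMonoidAlgebra.coeff_mul_apply_left, coeff_eulerDerivation,
    coeff_eulerDerivation, sum_pointwise_smul _ _ (by simp), sum_pointwise_smul _ _ (by simp)]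
  refine Finsupp.sum_congr fun m _ ↦ ?_
  rw [add_zero]
  ring

end EulerDerivation

section WLoop

variable {𝔤 : Type*} [LieRing 𝔤] [LieAlgebra ℝ 𝔤]

lemma wLoopOmega_eq_semidirectForm (φ : 𝔤 →ₗ[ℝ] ℝ) (x y : (ℤ →₀ ℝ) × (ℤ →₀ 𝔤)) :
    wLoopOmega 𝔤 φ x y =
      semidirectForm eulerDerivation constantCoeff (wLoopToLaurent φ x) (wLoopToLaurent φ y) := by
  simp only [semidirectForm, constantCoeff_eulerDerivation_sq_mul]
  rfl

lemma ofCoeff_wLoopBracket_fst (x y : (ℤ →₀ ℝ) × (ℤ →₀ 𝔤)) :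
    AddMonoidAlgebra.ofCoeff (wLoopBracket 𝔤 x y).1 =
      eulerDerivation (.ofCoeff x.1) * .ofCoeff y.1
        - .ofCoeff x.1 * eulerDerivation (.ofCoeff y.1) := by
  simp only [wLoopBracket, AddMonoidAlgebra.ofCoeff_finsuppSum, AddMonoidAlgebra.ofCoeff_single,
    eulerDerivation_mul, mul_eulerDerivation, ← Finsupp.sum_sub, ← AddMonoidAlgebra.single_sub]
  refine Finsupp.sum_congr fun m _ ↦ Finsupp.sum_congr fun n _ ↦ ?_
  congr 1
  ring

lemma loopToLaurent_wLoopBracket_snd (φ : 𝔤 →ₗ[ℝ] ℝ) (hφ : ∀ X Y : 𝔤, φ ⁅X, Y⁆ = 0)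
    (x y : (ℤ →₀ ℝ) × (ℤ →₀ 𝔤)) :
    loopToLaurent φ (wLoopBracket 𝔤 x y).2 =
      eulerDerivation (loopToLaurent φ x.2) * .ofCoeff y.1
        - .ofCoeff x.1 * eulerDerivation (loopToLaurent φ y.2) := by
  have hWL : loopToLaurent φ (x.1.sum fun m a ↦ y.2.sum fun n X ↦
        Finsupp.single (m + n) ((a * (-(n : ℝ))) • X))
      = -(.ofCoeff x.1 * eulerDerivation (loopToLaurent φ y.2)) := by
    rw [mul_eulerDerivation, ← Finsupp.sum_neg]
    simp only [map_finsuppSum, loopToLaurent_single, map_smul, smul_eq_mul]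
    refine Finsupp.sum_congr fun m _ ↦ ?_
    rw [sum_coeff_loopToLaurent φ _ (by simp), ← Finsupp.sum_neg]
    refine Finsupp.sum_congr fun n _ ↦ ?_
    rw [← AddMonoidAlgebra.single_neg]
    congr 1
    ring
  have hLW : loopToLaurent φ (x.2.sum fun m X ↦ y.1.sum fun n b ↦
        Finsupp.single (m + n) ((b * (m : ℝ)) • X))
      = eulerDerivation (loopToLaurent φ x.2) * .ofCoeff y.1 := by
    rw [eulerDerivation_mul, sum_coeff_loopToLaurent φ _ (by simp)]
    simp only [map_finsuppSum, loopToLaurent_single, map_smul, smul_eq_mul]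
    refine Finsupp.sum_congr fun m _ ↦ Finsupp.sum_congr fun n _ ↦ ?_
    congr 1
    ring
  have hLL : loopToLaurent φ (x.2.sum fun m X ↦ y.2.sum fun n Y ↦
      Finsupp.single (m + n) ⁅X, Y⁆) = 0 := by
    simp only [map_finsuppSum, loopToLaurent_single, hφ, AddMonoidAlgebra.single_zero,
      Finsupp.sum_fun_zero]
  rw [wLoopBracket, map_add, map_add, hWL, hLW, hLL]
  abel

lemma wLoopToLaurent_wLoopBracket (φ : 𝔤 →ₗ[ℝ] ℝ) (hφ : ∀ X Y : 𝔤, φ ⁅X, Y⁆ = 0)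
    (x y : (ℤ →₀ ℝ) × (ℤ →₀ 𝔤)) :
    wLoopToLaurent φ (wLoopBracket 𝔤 x y) =
      semidirectBracket eulerDerivation (wLoopToLaurent φ x) (wLoopToLaurent φ y) :=
  Prod.ext (ofCoeff_wLoopBracket_fst x y) (loopToLaurent_wLoopBracket_snd φ hφ x y)

theorem wLoopOmega_cocycle_general (𝔤 : Type*) [LieRing 𝔤] [LieAlgebra ℝ 𝔤]
    (φ : 𝔤 →ₗ[ℝ] ℝ) (hφ : ∀ X Y : 𝔤, φ ⁅X, Y⁆ = 0) (x y z : (ℤ →₀ ℝ) × (ℤ →₀ 𝔤)) :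
    wLoopOmega 𝔤 φ (wLoopBracket 𝔤 x y) z
      + wLoopOmega 𝔤 φ (wLoopBracket 𝔤 y z) x
      + wLoopOmega 𝔤 φ (wLoopBracket 𝔤 z x) y = 0 := by
  simp only [wLoopOmega_eq_semidirectForm, wLoopToLaurent_wLoopBracket φ hφ]
  exact semidirectForm_cocycle _ _ constantCoeff_eulerDerivation _ _ _

end WLoop

/-- Cocycle underlying the `g^a`-term of eqs. (4.2)–(4.3): for a finite-dimensional
real Lie algebra `𝔤` and a linear functional `φ` vanishing on `[𝔤,𝔤]`, the form
`ω(L_m, X(n)) = m² δ_{m+n,0} φ(X)` is a 2-cocycle on `W ⋉ L𝔤`. -/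
theorem wLoopOmega_cocycle (𝔤 : Type*) [LieRing 𝔤] [LieAlgebra ℝ 𝔤]
    [FiniteDimensional ℝ 𝔤] (φ : 𝔤 →ₗ[ℝ] ℝ) (hφ : ∀ X Y : 𝔤, φ ⁅X, Y⁆ = 0) :
    ∀ x y z : (ℤ →₀ ℝ) × (ℤ →₀ 𝔤),
      wLoopOmega 𝔤 φ (wLoopBracket 𝔤 x y) z
        + wLoopOmega 𝔤 φ (wLoopBracket 𝔤 y z) x
        + wLoopOmega 𝔤 φ (wLoopBracket 𝔤 z x) y = 0 := by
  exact wLoopOmega_cocycle_general 𝔤 φ hφ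
end
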